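/- Let N and M be nonempty finite types and let R : Matrix N M ℂ satisfy trace (R * Rᴴ) = 1. Then the von Neumann entropy H(R) of R equals 0 if and only if there exist vectors c : N → ℂ and d : M → ℂ such that R i j = c i * d j for all i ∈ N and j ∈ M (i.e., R is an outer product, R = vecMulVec c d). (Paper's Theorem 1.) -/

import Mathlib

open Matrix

/-- The von Neumann entropy of a relational matrix `R`, defined as
`-∑ₖ λₖ log λₖ` where `λₖ` are the eigenvalues of the Hermitian matrix `ρ = R * Rᴴ`. -/
noncomputable def vonNeumannEntropy {N M : Type*} [Fintype N] [Fintype M] [DecidableEq N]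
    (R : Matrix N M ℂ) : ℝ :=
  -∑ k, (Matrix.isHermitian_mul_conjTranspose_self R).eigenvalues k *
      Real.log ((Matrix.isHermitian_mul_conjTranspose_self R).eigenvalues k)

/-!
Outer products are the matrices of rank at most one, and `R` has the same rank as `ρ = R * Rᴴ`,
so `R` is an outer product exactly when `ρ` has at most one nonzero eigenvalue. The eigenvalues of
`ρ` are nonnegative and sum to `1`, and `-λ log λ` is nonnegative on `[0, 1]` and vanishes only at
the endpoints. So zero entropy means that every eigenvalue is `0` or `1`, which for numbers with
sum `1` means that at most one of them is nonzero.
-/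

open Real (negMulLog)
open scoped ComplexOrder

lemma negMulLog_eq_zero_iff_of_nonneg {x : ℝ} (hx : 0 ≤ x) :
    negMulLog x = 0 ↔ x = 0 ∨ x = 1 := by
  have hx_ne : x ≠ -1 := by linarith
  simp [negMulLog, hx_ne]

lemma sum_negMulLog_eq_zero_iff {ι : Type*} {s : Finset ι} {p : ι → ℝ}
    (hp : ∀ i ∈ s, p i ∈ Set.Icc 0 1) :
    ∑ i ∈ s, negMulLog (p i) = 0 ↔ ∀ i ∈ s, p i = 0 ∨ p i = 1 := by
  rw [Finset.sum_eq_zero_iff_of_nonneg fun i hi ↦ Real.negMulLog_nonneg (hp i hi).1 (hp i hi).2]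
  exact forall₂_congr fun i hi ↦ negMulLog_eq_zero_iff_of_nonneg (hp i hi).1

lemma forall_eq_zero_or_one_iff_card_support_le_one {ι S : Type*} [Fintype ι]
    [NonAssocSemiring S] [CharZero S] [DecidableEq S] {p : ι → S} (hp : ∑ i, p i = 1) :
    (∀ i, p i = 0 ∨ p i = 1) ↔ Fintype.card {i // p i ≠ 0} ≤ 1 := by
  constructor
  · intro h01
    have hp_eq : ∀ i, p i = if p i ≠ 0 then 1 else 0 := fun i ↦ by
      rcases h01 i with hi | hi <;> simp [hi]
    have hcard : (Fintype.card {i // p i ≠ 0} : S) = 1 := by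
      rw [Fintype.card_subtype, ← Finset.sum_boole]
      exact (Fintype.sum_congr _ _ hp_eq).symm.trans hp
    exact (Nat.cast_eq_one.mp hcard).le
  · intro hcard i
    refine or_iff_not_imp_left.mpr fun hi ↦ ?_
    have hother : ∀ j ≠ i, p j = 0 := fun j hji ↦ by
      by_contra hj
      exact hji (congrArg Subtype.val (Fintype.card_le_one_iff.mp hcard ⟨j, hj⟩ ⟨i, hi⟩))
    rw [← hp, Fintype.sum_eq_single i hother]

lemma sum_negMulLog_eq_zero_iff_card_support_le_one {ι : Type*} [Fintype ι] {p : ι → ℝ}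
    (hp : p ∈ stdSimplex ℝ ι) :
    ∑ i, negMulLog (p i) = 0 ↔ Fintype.card {i // p i ≠ 0} ≤ 1 := by
  rw [sum_negMulLog_eq_zero_iff fun i _ ↦ mem_Icc_of_mem_stdSimplex hp i,
    ← forall_eq_zero_or_one_iff_card_support_le_one hp.2]
  simp only [Finset.mem_univ, true_imp_iff]

lemma eigenvalues_mem_stdSimplex {n 𝕜 : Type*} [Fintype n] [DecidableEq n] [RCLike 𝕜]
    {A : Matrix n n 𝕜} (hA : A.PosSemidef) (htr : A.trace = 1) :
    hA.isHermitian.eigenvalues ∈ stdSimplex ℝ n := by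
  refine ⟨hA.eigenvalues_nonneg, ?_⟩
  rw [hA.isHermitian.trace_eq_sum_eigenvalues] at htr
  exact_mod_cast htr

lemma sum_negMulLog_eigenvalues_eq_zero_iff_rank_le_one {n 𝕜 : Type*} [Fintype n]
    [DecidableEq n] [RCLike 𝕜] {A : Matrix n n 𝕜} (hA : A.PosSemidef) (htr : A.trace = 1) :
    ∑ i, negMulLog (hA.isHermitian.eigenvalues i) = 0 ↔ A.rank ≤ 1 := by
  rw [hA.isHermitian.rank_eq_card_non_zero_eigs]
  exact sum_negMulLog_eq_zero_iff_card_support_le_one (eigenvalues_mem_stdSimplex hA htr)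

lemma rank_le_one_iff_exists_eq_vecMulVec {m n S : Type*} [Fintype n] [CommRing S] [IsDomain S]
    [IsPrincipalIdealRing S] {A : Matrix m n S} :
    A.rank ≤ 1 ↔ ∃ (c : m → S) (d : n → S), A = vecMulVec c d := by
  constructor
  · intro hrank
    have : Module.Finite S (Submodule.span S (Set.range A.col)) :=
      Module.Finite.span_of_finite S (Set.finite_range A.col)
    rw [rank_eq_finrank_span_cols, Submodule.finrank_le_one_iff_isPrincipal] at hrank
    obtain ⟨c, hc⟩ := hrank.principal
    have hcol : ∀ j, ∃ a : S, a • c = A.col j := fun j ↦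
      Submodule.mem_span_singleton.mp (hc ▸ Submodule.subset_span (Set.mem_range_self j))
    choose d hd using hcol
    refine ⟨c, d, Matrix.ext fun i j ↦ ?_⟩
    calc A i j = d j * c i := (congrFun (hd j) i).symm
      _ = vecMulVec c d i j := mul_comm _ _
  · rintro ⟨c, d, rfl⟩
    exact rank_vecMulVec_le c d

lemma vonNeumannEntropy_eq_sum_negMulLog {N M : Type*} [Fintype N] [Fintype M] [DecidableEq N]
    (R : Matrix N M ℂ) :
    vonNeumannEntropy R =
      ∑ k, negMulLog ((isHermitian_mul_conjTranspose_self R).eigenvalues k) := by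
  simp only [vonNeumannEntropy, negMulLog, neg_mul, Finset.sum_neg_distrib]

/-- Paper's Theorem 1: `H(R) = 0` iff `R` is an outer product `R i j = c i * d j`. -/
theorem entropy_zero_iff_outer_product {N M : Type*} [Fintype N] [Fintype M] [DecidableEq N]
    [Nonempty N] [Nonempty M]
    (R : Matrix N M ℂ) (htr : (R * Rᴴ).trace = 1) :
    vonNeumannEntropy R = 0 ↔ ∃ (c : N → ℂ) (d : M → ℂ), R = Matrix.vecMulVec c d := by
  calc vonNeumannEntropy R = 0
      ↔ (R * Rᴴ).rank ≤ 1 := by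
        rw [vonNeumannEntropy_eq_sum_negMulLog]
        exact sum_negMulLog_eigenvalues_eq_zero_iff_rank_le_one
          (posSemidef_self_mul_conjTranspose R) htr
    _ ↔ R.rank ≤ 1 := by rw [rank_self_mul_conjTranspose]
    _ ↔ ∃ (c : N → ℂ) (d : M → ℂ), R = vecMulVec c d := rank_le_one_iff_exists_eq_vecMulVec
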